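/- Let a, b, x, y be complex numbers with a ≠ 0, b ≠ 0, a² + b² ≠ 0, 1 + x ≠ 0, 1 + y ≠ 0, and let tx, ty, sx, sy be complex numbers with tx² = x, ty² = y, sx² = (a⁴ + b⁴)x + a²b²(1 + x²), and sy² = (a⁴ + b⁴)y + a²b²(1 + y²). Define the 4×4 complex matrices A(a,b,x,y) with rows (1/(4a²), y/(4a²), x/(4a²), xy/(4a²)), (1/(4ab), 1/(4ab), x/(4ab), x/(4ab)), (1/(4ab), y/(4ab), 1/(4ab), y/(4ab)), (1/(4b²), 1/(4b²), 1/(4b²), 1/(4b²)), and C(c,d,x,y) = (1/(c²+d²)) times the matrix with rows (d², cdy, cdx, c²xy), (d², cd, cdx, c²x), (d², cdy, cd, c²y), (d², cd, cd, c²), and set M = A(a,b,x,y) · C(1/(2a), 1/(2b), x, y) · A(1/(2a), 1/(2b), x, y) · C(a,b,x,y). Then for each i,j ∈ {0,1}, setting λ = ((a²+b²)·tx − (−1)^i·sx)² · ((a²+b²)·ty − (−1)^j·sy)² / (4a²b²(a²+b²)²), u = ((b²−a²)·x − (−1)^i·tx·sx)/(a·b·(1+x)), and v = ((b²−a²)·y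 − (−1)^j·ty·sy)/(a·b·(1+y)), the vector (u·v, u, v, 1) is an eigenvector of M with eigenvalue λ, i.e. M·(u·v, u, v, 1)ᵀ = λ·(u·v, u, v, 1)ᵀ. -/

import Mathlib

/-!
Both matrices factor as Kronecker products in the variables `x` and `y`: up to scalars,
`A(p, r, x, y)` is `!![1/p, x/p; 1/r, 1/r] ⊗ !![1/p, y/p; 1/r, 1/r]` and `C(c, d, x, y)` is
`!![d, c x; d, c] ⊗ !![d, c y; d, c]`. Hence `M` is a scalar multiple of `T x ⊗ T y` for a `2 × 2`
matrix `T w`, and tensor products of eigenvectors of `T x` and `T y` are eigenvectors of `M`.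

In one variable `T w = (1 - w)² + (2 (a² + b²) / (a b)) Q w`, where `Q w` has the eigenvector
`(u, 1)` with eigenvalue `t β`, `t² = w`, `β = ((a² + b²) t - s) / (a b)`. The quadratic equation
`β² = (1 - w)² + (2 (a² + b²) / (a b)) t β` then identifies the eigenvalue of `T w` as `β²`.
-/

namespace TwoPeriodicAztec

open Matrix
open scoped Kronecker

section Kronecker

variable {R : Type*} [CommSemiring R] {m n : ℕ}

/-- The Kronecker product with its index set `Fin m × Fin n` flattened to `Fin (m * n)` in
lexicographic order, so that the transfer matrices can be written as such products. -/
def finKronecker (P : Matrix (Fin m) (Fin m) R) (Q : Matrix (Fin n) (Fin n) R) :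
    Matrix (Fin (m * n)) (Fin (m * n)) R :=
  (P ⊗ₖ Q).submatrix finProdFinEquiv.symm finProdFinEquiv.symm

/-- The tensor product of two coordinate vectors, flattened in the same order as
`finKronecker`. -/
def finTensor (u : Fin m → R) (v : Fin n → R) : Fin (m * n) → R :=
  fun k => u k.divNat * v k.modNat

lemma finKronecker_mul_finKronecker (P P' : Matrix (Fin m) (Fin m) R)
    (Q Q' : Matrix (Fin n) (Fin n) R) :
    finKronecker P Q * finKronecker P' Q' = finKronecker (P * P') (Q * Q') := by
  simp only [finKronecker, submatrix_mul_equiv, mul_kronecker_mul]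

lemma finKronecker_mulVec_finTensor (P : Matrix (Fin m) (Fin m) R)
    (Q : Matrix (Fin n) (Fin n) R) (u : Fin m → R) (v : Fin n → R) :
    finKronecker P Q *ᵥ finTensor u v = finTensor (P *ᵥ u) (Q *ᵥ v) := by
  ext k
  simp only [finKronecker, finTensor, mulVec, dotProduct, submatrix_apply, kroneckerMap_apply,
    finProdFinEquiv_symm_apply, Finset.sum_mul_sum, ← Fintype.sum_prod_type']
  refine Fintype.sum_equiv finProdFinEquiv.symm _ _ fun l => ?_
  exact mul_mul_mul_comm ..

lemma finKronecker_two_two (p q r s p' q' r' s' : R) :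
    finKronecker !![p, q; r, s] !![p', q'; r', s'] =
      !![p * p', p * q', q * p', q * q';
         p * r', p * s', q * r', q * s';
         r * p', r * q', s * p', s * q';
         r * r', r * s', s * r', s * s'] := by
  ext i j
  fin_cases i <;> fin_cases j <;> rfl

lemma finTensor_smul_smul (α β : R) (u : Fin m → R) (v : Fin n → R) :
    finTensor (α • u) (β • v) = (α * β) • finTensor u v := by
  ext k
  exact mul_mul_mul_comm ..

lemma finTensor_pair_one (u v : R) :
    finTensor ![u, 1] ![v, 1] = ![u * v, u, v, 1] := by
  have tensor_entries : finTensor ![u, 1] ![v, 1] = ![u * v, u * 1, 1 * v, 1 * 1] := by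
    ext k
    fin_cases k <;> rfl
  simpa only [mul_one, one_mul] using tensor_entries

end Kronecker

variable {K : Type*} [Field K]

/-- The transfer matrix `A(p, r, x, y)` from odd to even order. -/
def transferA (x y p r : K) : Matrix (Fin 4) (Fin 4) K :=
  !![1 / (4 * p ^ 2), y / (4 * p ^ 2), x / (4 * p ^ 2), x * y / (4 * p ^ 2);
     1 / (4 * p * r), 1 / (4 * p * r), x / (4 * p * r), x / (4 * p * r);
     1 / (4 * p * r), y / (4 * p * r), 1 / (4 * p * r), y / (4 * p * r);
     1 / (4 * r ^ 2), 1 / (4 * r ^ 2), 1 / (4 * r ^ 2), 1 / (4 * r ^ 2)]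

/-- The transfer matrix `C(c, d, x, y)` from even to odd order. -/
def transferC (x y c d : K) : Matrix (Fin 4) (Fin 4) K :=
  (c ^ 2 + d ^ 2)⁻¹ •
    !![d ^ 2, c * d * y, c * d * x, c ^ 2 * x * y;
       d ^ 2, c * d, c * d * x, c ^ 2 * x;
       d ^ 2, c * d * y, c * d, c ^ 2 * y;
       d ^ 2, c * d, c * d, c ^ 2]

/-- The two-step transfer matrix `M`. -/
def twoStepTransfer (x y a b : K) : Matrix (Fin 4) (Fin 4) K :=
  transferA x y a b * transferC x y (1 / (2 * a)) (1 / (2 * b)) *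
    transferA x y (1 / (2 * a)) (1 / (2 * b)) * transferC x y a b

/-- The factor of `transferA` in a single variable `w`. -/
def factorA (w p r : K) : Matrix (Fin 2) (Fin 2) K :=
  !![1 / p, w / p; 1 / r, 1 / r]

/-- The factor of `transferC` in a single variable `w`. -/
def factorC (w c d : K) : Matrix (Fin 2) (Fin 2) K :=
  !![d, c * w; d, c]

/-- The factor `T w` of the two-step transfer matrix in a single variable `w`. -/
def twoStepFactor (w a b : K) : Matrix (Fin 2) (Fin 2) K :=
  factorA w a b * factorC w (1 / (2 * a)) (1 / (2 * b)) *
    factorA w (1 / (2 * a)) (1 / (2 * b)) * factorC w a b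

/-- The matrix `Q w`, of which `twoStepFactor` is an affine function. -/
def reducedFactor (w a b : K) : Matrix (Fin 2) (Fin 2) K :=
  !![2 * w * b / a, w * (1 + w); 1 + w, 2 * w * a / b]

/-- The number `β`, a square root of an eigenvalue of `twoStepFactor`. Here `t` and `s` stand for
chosen square roots of `w` and of `(a⁴ + b⁴) w + a² b² (1 + w²)`; the other eigenvalue comes from
`-s`. Up to normalization this is the `β_l(a, b, w)` of the paper. -/
def eigenvalueRoot (a b t s : K) : K :=
  ((a ^ 2 + b ^ 2) * t - s) / (a * b)

/-- The first coordinate `u` of the eigenvector `(u, 1)` of `twoStepFactor`, with `t` and `s` as in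
`eigenvalueRoot`. -/
def eigenvectorCoord (a b w t s : K) : K :=
  ((b ^ 2 - a ^ 2) * w - s * t) / (a * b * (1 + w))

lemma transferA_eq_finKronecker (x y p r : K) :
    transferA x y p r = (1 / 4 : K) • finKronecker (factorA x p r) (factorA y p r) := by
  rw [factorA, factorA, finKronecker_two_two]
  ext i j
  fin_cases i <;> fin_cases j <;> simp [transferA] <;> ring

lemma transferC_eq_finKronecker (x y c d : K) :
    transferC x y c d = (c ^ 2 + d ^ 2)⁻¹ • finKronecker (factorC x c d) (factorC y c d) := by
  rw [transferC, factorC, factorC, finKronecker_two_two]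
  congr 1
  ext i j
  fin_cases i <;> fin_cases j <;> simp <;> ring

section OneVariable

variable {a b w t s : K}

lemma eigenvalueRoot_sq (ha : a ≠ 0) (hb : b ≠ 0) (ht : t ^ 2 = w)
    (hs : s ^ 2 = (a ^ 4 + b ^ 4) * w + a ^ 2 * b ^ 2 * (1 + w ^ 2)) :
    eigenvalueRoot a b t s ^ 2 =
      (1 - w) ^ 2 + 2 * (a ^ 2 + b ^ 2) / (a * b) * (t * eigenvalueRoot a b t s) := by
  unfold eigenvalueRoot
  field_simp
  linear_combination hs - (a ^ 2 + b ^ 2) ^ 2 * ht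

lemma reducedFactor_mulVec_eigenvectorCoord (ha : a ≠ 0) (hb : b ≠ 0) (hw : 1 + w ≠ 0)
    (ht : t ^ 2 = w) (hs : s ^ 2 = (a ^ 4 + b ^ 4) * w + a ^ 2 * b ^ 2 * (1 + w ^ 2)) :
    reducedFactor w a b *ᵥ ![eigenvectorCoord a b w t s, 1] =
      (t * eigenvalueRoot a b t s) • ![eigenvectorCoord a b w t s, 1] := by
  set u := eigenvectorCoord a b w t s with hu
  have first_row : 2 * w * b / a * u + w * (1 + w) = t * eigenvalueRoot a b t s * u := by
    rw [hu, eigenvectorCoord, eigenvalueRoot]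
    field_simp
    linear_combination
      -(w * (b ^ 4 - a ^ 4) - (a ^ 2 + b ^ 2) * s * t + s ^ 2) * ht - w * hs
  have second_row : (1 + w) * u + 2 * w * a / b = t * eigenvalueRoot a b t s := by
    rw [hu, eigenvectorCoord, eigenvalueRoot]
    field_simp
    linear_combination -(a ^ 2 + b ^ 2) * ht
  ext k
  fin_cases k
  · simpa [reducedFactor, mul_comm] using first_row
  · simpa [reducedFactor, mul_comm] using second_row

variable [NeZero (2 : K)]

lemma twoStepFactor_eq_add_reducedFactor (ha : a ≠ 0) (hb : b ≠ 0) :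
    twoStepFactor w a b =
      (1 - w) ^ 2 • 1 + (2 * (a ^ 2 + b ^ 2) / (a * b)) • reducedFactor w a b := by
  have h2 : (2 : K) ≠ 0 := two_ne_zero
  ext i j
  fin_cases i <;> fin_cases j <;>
    simp [twoStepFactor, factorA, factorC, reducedFactor] <;> field_simp <;> ring

lemma twoStepFactor_mulVec_eigenvectorCoord (ha : a ≠ 0) (hb : b ≠ 0) (hw : 1 + w ≠ 0)
    (ht : t ^ 2 = w) (hs : s ^ 2 = (a ^ 4 + b ^ 4) * w + a ^ 2 * b ^ 2 * (1 + w ^ 2)) :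
    twoStepFactor w a b *ᵥ ![eigenvectorCoord a b w t s, 1] =
      eigenvalueRoot a b t s ^ 2 • ![eigenvectorCoord a b w t s, 1] := by
  rw [twoStepFactor_eq_add_reducedFactor ha hb, add_mulVec, smul_mulVec, smul_mulVec, one_mulVec,
    reducedFactor_mulVec_eigenvectorCoord ha hb hw ht hs, smul_smul, ← add_smul,
    ← eigenvalueRoot_sq ha hb ht hs]

end OneVariable

lemma twoStepTransfer_eq_finKronecker [NeZero (2 : K)] {a b : K} (ha : a ≠ 0)
    (hb : b ≠ 0) (x y : K) :
    twoStepTransfer x y a b = (a ^ 2 * b ^ 2 / (4 * (a ^ 2 + b ^ 2) ^ 2)) •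
      finKronecker (twoStepFactor x a b) (twoStepFactor y a b) := by
  have h2 : (2 : K) ≠ 0 := two_ne_zero
  have h4 : (4 : K) ≠ 0 := by
    rw [show (4 : K) = 2 * 2 by norm_num]
    exact mul_ne_zero h2 h2
  have inv_dual_norm : ((1 / (2 * a)) ^ 2 + (1 / (2 * b)) ^ 2)⁻¹ =
      4 * a ^ 2 * b ^ 2 / (a ^ 2 + b ^ 2) := by
    have dual_norm : (1 / (2 * a)) ^ 2 + (1 / (2 * b)) ^ 2 =
        (a ^ 2 + b ^ 2) / (4 * a ^ 2 * b ^ 2) := by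
      field_simp
      ring
    rw [dual_norm, inv_div]
  simp only [twoStepTransfer, twoStepFactor, transferA_eq_finKronecker, transferC_eq_finKronecker,
    smul_mul_smul_comm, inv_dual_norm]
  have mul_factors := finKronecker_mul_finKronecker (R := K) (m := 2) (n := 2)
  rw [mul_factors, mul_factors, mul_factors]
  congr 1
  field_simp

end TwoPeriodicAztec

open TwoPeriodicAztec in
theorem two_periodic_transfer_matrix_eigensystem_general {K : Type*} [Field K] [NeZero (2 : K)]
    {a b x y tx ty sx sy : K} (ha : a ≠ 0) (hb : b ≠ 0)
    (hab : a ^ 2 + b ^ 2 ≠ 0) (hx : 1 + x ≠ 0) (hy : 1 + y ≠ 0)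
    (htx : tx ^ 2 = x) (hty : ty ^ 2 = y)
    (hsx : sx ^ 2 = (a ^ 4 + b ^ 4) * x + a ^ 2 * b ^ 2 * (1 + x ^ 2))
    (hsy : sy ^ 2 = (a ^ 4 + b ^ 4) * y + a ^ 2 * b ^ 2 * (1 + y ^ 2)) :
    let lam := ((a ^ 2 + b ^ 2) * tx - sx) ^ 2 * ((a ^ 2 + b ^ 2) * ty - sy) ^ 2 /
      (4 * a ^ 2 * b ^ 2 * (a ^ 2 + b ^ 2) ^ 2)
    let u := eigenvectorCoord a b x tx sx
    let v := eigenvectorCoord a b y ty sy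
    (twoStepTransfer x y a b).mulVec ![u * v, u, v, 1] = lam • ![u * v, u, v, 1] := by
  intro lam u v
  have lam_eq : a ^ 2 * b ^ 2 / (4 * (a ^ 2 + b ^ 2) ^ 2) *
      (eigenvalueRoot a b tx sx ^ 2 * eigenvalueRoot a b ty sy ^ 2) = lam := by
    simp only [eigenvalueRoot, lam]
    field_simp
  rw [← finTensor_pair_one, twoStepTransfer_eq_finKronecker ha hb, Matrix.smul_mulVec,
    finKronecker_mulVec_finTensor, twoStepFactor_mulVec_eigenvectorCoord ha hb hx htx hsx,
    twoStepFactor_mulVec_eigenvectorCoord ha hb hy hty hsy, finTensor_smul_smul, smul_smul, lam_eq]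

/-- Explicit eigenvectors and eigenvalues of the two-step transfer
matrix `M = A(a,b,x,y)·C(1/(2a),1/(2b),x,y)·A(1/(2a),1/(2b),x,y)·C(a,b,x,y)` of the
boundary generating functions of the two-periodic Aztec diamond. -/
theorem two_periodic_transfer_matrix_eigensystem
    (a b x y tx ty sx sy : ℂ) (ha : a ≠ 0) (hb : b ≠ 0)
    (hab : a ^ 2 + b ^ 2 ≠ 0) (hx : 1 + x ≠ 0) (hy : 1 + y ≠ 0)
    (htx : tx ^ 2 = x) (hty : ty ^ 2 = y)
    (hsx : sx ^ 2 = (a ^ 4 + b ^ 4) * x + a ^ 2 * b ^ 2 * (1 + x ^ 2))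
    (hsy : sy ^ 2 = (a ^ 4 + b ^ 4) * y + a ^ 2 * b ^ 2 * (1 + y ^ 2))
    (i j : ℕ) (hi : i ≤ 1) (hj : j ≤ 1) :
    let A : ℂ → ℂ → Matrix (Fin 4) (Fin 4) ℂ := fun p r =>
      !![1 / (4 * p ^ 2), y / (4 * p ^ 2), x / (4 * p ^ 2), x * y / (4 * p ^ 2);
         1 / (4 * p * r), 1 / (4 * p * r), x / (4 * p * r), x / (4 * p * r);
         1 / (4 * p * r), y / (4 * p * r), 1 / (4 * p * r), y / (4 * p * r);
         1 / (4 * r ^ 2), 1 / (4 * r ^ 2), 1 / (4 * r ^ 2), 1 / (4 * r ^ 2)]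
    let Cm : ℂ → ℂ → Matrix (Fin 4) (Fin 4) ℂ := fun c d =>
      (c ^ 2 + d ^ 2)⁻¹ •
        !![d ^ 2, c * d * y, c * d * x, c ^ 2 * x * y;
           d ^ 2, c * d, c * d * x, c ^ 2 * x;
           d ^ 2, c * d * y, c * d, c ^ 2 * y;
           d ^ 2, c * d, c * d, c ^ 2]
    let M : Matrix (Fin 4) (Fin 4) ℂ :=
      A a b * Cm (1 / (2 * a)) (1 / (2 * b)) * A (1 / (2 * a)) (1 / (2 * b)) * Cm a b
    let lam : ℂ :=
      ((a ^ 2 + b ^ 2) * tx - (-1) ^ i * sx) ^ 2 *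
        ((a ^ 2 + b ^ 2) * ty - (-1) ^ j * sy) ^ 2 /
        (4 * a ^ 2 * b ^ 2 * (a ^ 2 + b ^ 2) ^ 2)
    let u : ℂ := ((b ^ 2 - a ^ 2) * x - (-1) ^ i * tx * sx) / (a * b * (1 + x))
    let v : ℂ := ((b ^ 2 - a ^ 2) * y - (-1) ^ j * ty * sy) / (a * b * (1 + y))
    M.mulVec ![u * v, u, v, 1] = lam • ![u * v, u, v, 1] := by
  have neg_one_pow_mul_sq (k : ℕ) (s : ℂ) : ((-1) ^ k * s) ^ 2 = s ^ 2 := by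
    rw [mul_pow, ← pow_mul', (even_two_mul k).neg_one_pow, one_mul]
  open TwoPeriodicAztec in
  simpa only [twoStepTransfer, transferA, transferC, eigenvectorCoord, mul_right_comm _ sx tx,
    mul_right_comm _ sy ty] using
    two_periodic_transfer_matrix_eigensystem_general ha hb hab hx hy htx hty
      ((neg_one_pow_mul_sq i sx).trans hsx) ((neg_one_pow_mul_sq j sy).trans hsy)
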